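/- arXiv:1607.01166 — 2 statements merged into one kernel-verified Lean document; each statement's English description precedes it below -/
import Mathlib

section
/- Let ν be the standard Gaussian measure on ℝ, let m ≥ 1, let t₀ < t₁ < … < t_m be pairwise distinct nonnegative reals, and let (b₀, …, b_m) be the unique tuple with Σ_{l=0}^m b_l e^{−k t_l} = 0 for k ∈ {0, …, m−1} and Σ_{l=0}^m b_l e^{−m t_l} = 1. Let ψ : ℝ → ℝ be bounded and measurable, and define Φ(x) = Σ_{l=0}^m b_l ∫_ℝ ψ( e^{−t_l} x + √(1 − e^{−2t_l}) y ) ν(dy). Then Φ is bounded with ‖Φ‖_∞ ≤ ‖ψ‖_∞ Σ_{l=0}^m |b_l|, and for every nonnegative integer k, ∫_ℝ Φ H_k dν = ( Σ_{l=0}^m b_l e^{−k t_l} ) ∫_ℝ ψ H_k dν. In particular ∫_ℝ Φ H_k dν = 0 for all k < m and ∫_ℝ Φ H_m dν = ∫_ℝ ψ H_m dν; hence, if ∫_ℝ ψ H_m dν ≠ 0, then Φ has Hermite rank m. -/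
open MeasureTheory ProbabilityTheory Filter Set
open scoped Topology

noncomputable section

/-- The `n`-th probabilists' Hermite polynomial, as a function `ℝ → ℝ`. -/
def hermiteR (n : ℕ) (x : ℝ) : ℝ := Polynomial.aeval x (Polynomial.hermite n)

/-- The standard Gaussian measure on `ℝ`. -/
def stdGaussian : Measure ℝ := gaussianReal 0 1

/-! The Ornstein–Uhlenbeck operators `P_t` are symmetric with respect to `ν`, because `ν ⊗ ν` is
invariant under the reflection `(x, y) ↦ (a x + s y, s x - a y)` whenever `a² + s² = 1`, and `P_t`
multiplies `H_k` by `e^{-kt}`: by Stein's identity, `P_t` intertwines the raising operator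
`p ↦ X p - p'` with `e^{-t}` times itself. Moving `P_t` from `ψ` to `H_k` thus multiplies the `k`-th
Hermite coefficient by `e^{-kt}`, and the choice of `b` cancels the coefficients below `m`. -/

open scoped ENNReal NNReal Polynomial

local notation "ν" => gaussianReal 0 1

section Gaussian

variable {μ : ℝ} {v : ℝ≥0}

lemma memLp_eval_gaussianReal (p : ℝ[X]) {q : ℝ≥0∞} (hq : q ≠ ∞) :
    MemLp (fun x ↦ p.eval x) q (gaussianReal μ v) := by
  induction p using Polynomial.induction_on generalizing q with
  | C a => simpa using memLp_const a
  | add p r hp hr => simpa only [Polynomial.eval_add] using! (hp hq).add (hr hq)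
  | monomial n a ih =>
    have h_double : q * 2 ≠ ∞ := ENNReal.mul_ne_top hq ENNReal.ofNat_ne_top
    have : ENNReal.HolderTriple (q * 2) (q * 2) q := ⟨by
      rw [ENNReal.mul_inv (by simp) (by simp), ← mul_add, ENNReal.inv_two_add_inv_two, mul_one]⟩
    simpa [pow_succ, mul_assoc] using
      (memLp_id_gaussianReal' (q * 2) h_double).mul' (ih h_double)

lemma integrable_eval_gaussianReal (p : ℝ[X]) :
    Integrable (fun x ↦ p.eval x) (gaussianReal μ v) :=
  memLp_one_iff_integrable.1 (memLp_eval_gaussianReal p ENNReal.one_ne_top)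

lemma hasDerivAt_gaussianPDFReal (μ : ℝ) (v : ℝ≥0) (x : ℝ) :
    HasDerivAt (gaussianPDFReal μ v) (-(x - μ) / v * gaussianPDFReal μ v x) x := by
  have h_exponent : HasDerivAt (fun y ↦ -(y - μ) ^ 2 / (2 * v)) (-(x - μ) / v) x :=
    (((((hasDerivAt_id x).sub_const μ).pow 2).neg).div_const (2 * (v : ℝ))).congr_deriv (by
      simp only [id_eq, Nat.cast_ofNat]; ring)
  exact (h_exponent.exp.const_mul _).congr_deriv (by rw [gaussianPDFReal]; ring)

lemma integrable_gaussianReal_iff {f : ℝ → ℝ} (hv : v ≠ 0) :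
    Integrable f (gaussianReal μ v) ↔ Integrable (fun x ↦ gaussianPDFReal μ v x * f x) := by
  rw [gaussianReal_of_var_ne_zero _ hv, integrable_withDensity_iff_integrable_smul'
    (measurable_gaussianPDF _ _) (ae_of_all _ fun _ ↦ gaussianPDF_lt_top)]
  simp only [toReal_gaussianPDF, smul_eq_mul]

lemma integral_sub_mean_mul_gaussianReal {f f' : ℝ → ℝ} (hf : ∀ x, HasDerivAt f (f' x) x)
    (hf_int : Integrable f (gaussianReal μ v)) (hf'_int : Integrable f' (gaussianReal μ v))
    (hxf_int : Integrable (fun x ↦ (x - μ) * f x) (gaussianReal μ v)) :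
    ∫ x, (x - μ) * f x ∂gaussianReal μ v = v * ∫ x, f' x ∂gaussianReal μ v := by
  obtain rfl | hv := eq_or_ne v 0
  · simp
  have hv' : (v : ℝ) ≠ 0 := by exact_mod_cast hv
  have h_deriv (x : ℝ) : HasDerivAt (fun y ↦ gaussianPDFReal μ v y * f y)
      (gaussianPDFReal μ v x * (f' x - (v : ℝ)⁻¹ * ((x - μ) * f x))) x :=
    ((hasDerivAt_gaussianPDFReal μ v x).mul (hf x)).congr_deriv (by ring)
  have h_zero : ∫ x, (f' x - (v : ℝ)⁻¹ * ((x - μ) * f x)) ∂gaussianReal μ v = 0 := by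
    rw [integral_gaussianReal_eq_integral_smul hv]
    exact integral_eq_zero_of_hasDerivAt_of_integrable h_deriv
      ((integrable_gaussianReal_iff hv).1 (hf'_int.sub (hxf_int.const_mul _)))
      ((integrable_gaussianReal_iff hv).1 hf_int)
  rw [integral_sub hf'_int (hxf_int.const_mul _), integral_const_mul, sub_eq_zero] at h_zero
  rw [h_zero, mul_inv_cancel_left₀ hv']

lemma integral_sub_mean_mul_eval_gaussianReal (p : ℝ[X]) :
    ∫ x, (x - μ) * p.eval x ∂gaussianReal μ v =
      v * ∫ x, p.derivative.eval x ∂gaussianReal μ v := by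
  have h_int := integrable_eval_gaussianReal (μ := μ) (v := v)
    ((Polynomial.X - Polynomial.C μ) * p)
  simp only [Polynomial.eval_mul, Polynomial.eval_sub, Polynomial.eval_X, Polynomial.eval_C]
    at h_int
  exact integral_sub_mean_mul_gaussianReal p.hasDerivAt (integrable_eval_gaussianReal p)
    (integrable_eval_gaussianReal p.derivative) h_int

lemma measurePreserving_rotation_gaussianReal (θ : ℝ) :
    MeasurePreserving (ContinuousLinearMap.rotation θ)
      ((gaussianReal 0 v).prod (gaussianReal 0 v)) ((gaussianReal 0 v).prod (gaussianReal 0 v)) :=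
  ⟨by fun_prop, IsGaussian.map_rotation_eq_self_of_forall_strongDual_eq_zero
    (fun L ↦ by simp [integral_continuousLinearMap_gaussianReal]) θ⟩

lemma exists_eq_cos_and_eq_sin {a s : ℝ} (h : a ^ 2 + s ^ 2 = 1) :
    ∃ θ : ℝ, a = Real.cos θ ∧ s = Real.sin θ := by
  have h_norm : ‖(⟨a, s⟩ : ℂ)‖ = 1 := by
    rw [Complex.norm_eq_sqrt_sq_add_sq, h, Real.sqrt_one]
  refine ⟨Complex.arg ⟨a, s⟩, ?_, ?_⟩
  · simpa [h_norm] using (Complex.norm_mul_cos_arg ⟨a, s⟩).symm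
  · simpa [h_norm] using (Complex.norm_mul_sin_arg ⟨a, s⟩).symm

lemma measurePreserving_reflection_gaussianReal {a s : ℝ} (h : a ^ 2 + s ^ 2 = 1) :
    MeasurePreserving (fun z : ℝ × ℝ ↦ (a * z.1 + s * z.2, s * z.1 - a * z.2))
      ((gaussianReal 0 v).prod (gaussianReal 0 v))
      ((gaussianReal 0 v).prod (gaussianReal 0 v)) := by
  obtain ⟨θ, rfl, rfl⟩ := exists_eq_cos_and_eq_sin h
  have h_neg : MeasurePreserving (fun y : ℝ ↦ -y) (gaussianReal 0 v) (gaussianReal 0 v) :=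
    ⟨measurable_neg, by simp [gaussianReal_map_neg]⟩
  convert ((MeasurePreserving.id (gaussianReal 0 v)).prod h_neg).comp
    (measurePreserving_rotation_gaussianReal θ) using 1
  ext z
  · simp [ContinuousLinearMap.rotation_apply]
  · simp [ContinuousLinearMap.rotation_apply, sub_eq_add_neg, add_comm]

end Gaussian

/-- Mehler's form of the Ornstein–Uhlenbeck operator, in the parameters `a = e^{-t}` and
`s = √(1 - e^{-2t})`, so that the relation `a² + s² = 1` replaces the time `t`. -/
def mehlerOp (a s : ℝ) (f : ℝ → ℝ) (x : ℝ) : ℝ := ∫ y, f (a * x + s * y) ∂ν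

/-- The Ornstein–Uhlenbeck semigroup `P_t`, meaningful for `0 ≤ t` (for `t < 0` the square root
has the junk value `0`). -/
def ouSemigroup (t : ℝ) : (ℝ → ℝ) → ℝ → ℝ :=
  mehlerOp (Real.exp (-t)) (Real.sqrt (1 - Real.exp (-(2 * t))))

section Mehler

variable {a s : ℝ} {f g : ℝ → ℝ} {p q : ℝ≥0∞}

lemma abs_mehlerOp_le {K : ℝ} (hf : ∀ x, |f x| ≤ K) (a s x : ℝ) : |mehlerOp a s f x| ≤ K := by
  simpa [mehlerOp] using norm_integral_le_of_norm_le_const (μ := ν)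
    (f := fun y ↦ f (a * x + s * y)) (ae_of_all _ fun y ↦ hf (a * x + s * y))

lemma integrable_comp_mul_fst (h : a ^ 2 + s ^ 2 = 1) [p.HolderConjugate q]
    (hf : MemLp f p ν) (hg : MemLp g q ν) :
    Integrable (fun z : ℝ × ℝ ↦ f (a * z.1 + s * z.2) * g z.1) ((ν).prod ν) := by
  have h_fst : MeasurePreserving Prod.fst ((ν).prod ν) ν := measurePreserving_fst
  exact (hf.comp_measurePreserving
    (h_fst.comp (measurePreserving_reflection_gaussianReal h))).integrable_mul
    (hg.comp_measurePreserving h_fst)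

lemma integrable_mehlerOp_mul (h : a ^ 2 + s ^ 2 = 1) [p.HolderConjugate q]
    (hf : MemLp f p ν) (hg : MemLp g q ν) :
    Integrable (fun x ↦ mehlerOp a s f x * g x) ν := by
  simpa only [mehlerOp, integral_mul_const] using
    (integrable_comp_mul_fst h hf hg).integral_prod_left

lemma integral_mehlerOp_mul_comm (h : a ^ 2 + s ^ 2 = 1) [p.HolderConjugate q]
    (hf : MemLp f p ν) (hg : MemLp g q ν) :
    ∫ x, mehlerOp a s f x * g x ∂ν = ∫ x, f x * mehlerOp a s g x ∂ν := by
  let F : ℝ × ℝ → ℝ := fun z ↦ f (a * z.1 + s * z.2) * g z.1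
  let R : ℝ × ℝ → ℝ × ℝ := fun z ↦ (a * z.1 + s * z.2, s * z.1 - a * z.2)
  have hR : MeasurePreserving R ((ν).prod ν) ((ν).prod ν) :=
    measurePreserving_reflection_gaussianReal h
  have hF : Integrable F ((ν).prod ν) := integrable_comp_mul_fst h hf hg
  have hFR (z : ℝ × ℝ) : F (R z) = f z.1 * g (a * z.1 + s * z.2) := by
    have h_invol : a * (a * z.1 + s * z.2) + s * (s * z.1 - a * z.2) = z.1 := by
      linear_combination z.1 * h
    simp only [F, R, h_invol]
  calc ∫ x, mehlerOp a s f x * g x ∂ν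
      = ∫ z, F z ∂(ν).prod ν := by
        simp only [integral_prod _ hF, F, integral_mul_const, mehlerOp]
    _ = ∫ z, F (R z) ∂(ν).prod ν := by
        conv_lhs => rw [← hR.map_eq]
        exact integral_map hR.aemeasurable (hR.map_eq.symm ▸ hF.aestronglyMeasurable)
    _ = ∫ x, f x * mehlerOp a s g x ∂ν := by
        have hFR_int : Integrable (fun z ↦ F (R z)) ((ν).prod ν) :=
          hR.integrable_comp_of_integrable hF
        rw [integral_prod _ hFR_int]
        simp only [hFR, integral_const_mul, mehlerOp]

end Mehler

section Hermite

open Polynomial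

lemma mehlerOp_eval_X_mul_sub_derivative {a s : ℝ} (h : a ^ 2 + s ^ 2 = 1) (p : ℝ[X]) (x : ℝ) :
    mehlerOp a s (X * p - derivative p).eval x =
      a * x * mehlerOp a s p.eval x - a ^ 2 * mehlerOp a s (derivative p).eval x := by
  obtain ⟨L, hL, hL'⟩ : ∃ L : ℝ[X], (∀ y, L.eval y = a * x + s * y) ∧ derivative L = C s :=
    ⟨C (a * x) + C s * X, fun y ↦ by simp, by simp⟩
  have h_int (r : ℝ[X]) : Integrable (fun y ↦ r.eval (a * x + s * y)) ν := by
    simpa only [eval_comp, hL] using integrable_eval_gaussianReal (r.comp L)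
  have h_int_mul : Integrable (fun y ↦ y * p.eval (a * x + s * y)) ν := by
    have := integrable_eval_gaussianReal (μ := 0) (v := 1) (X * p.comp L)
    simpa only [eval_mul, eval_X, eval_comp, hL] using this
  have h_stein : ∫ y, y * p.eval (a * x + s * y) ∂ν =
      s * mehlerOp a s (derivative p).eval x := by
    simpa [derivative_comp, hL, hL', integral_const_mul, mehlerOp] using
      integral_sub_mean_mul_eval_gaussianReal (μ := 0) (v := 1) (p.comp L)
  calc mehlerOp a s (X * p - derivative p).eval x
      = ∫ y, (a * x * p.eval (a * x + s * y) + s * (y * p.eval (a * x + s * y))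
          - (derivative p).eval (a * x + s * y)) ∂ν := by
        refine integral_congr_ae (ae_of_all _ fun y ↦ ?_)
        simp only [eval_sub, eval_mul, eval_X]
        ring
    _ = a * x * mehlerOp a s p.eval x + s * (s * mehlerOp a s (derivative p).eval x)
          - mehlerOp a s (derivative p).eval x := by
        have h_int_left := (h_int p).const_mul (a * x)
        have h_int_right := h_int_mul.const_mul s
        rw [integral_sub (by exact h_int_left.add h_int_right) (h_int _),
          integral_add h_int_left h_int_right, integral_const_mul,
          integral_const_mul, h_stein]
        rfl
    _ = a * x * mehlerOp a s p.eval x - a ^ 2 * mehlerOp a s (derivative p).eval x := by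
        linear_combination mehlerOp a s (derivative p).eval x * h

lemma derivative_hermite_succ (n : ℕ) :
    derivative (hermite (n + 1)) = (n + 1) * hermite n := by
  induction n with
  | zero => simp
  | succ n ih =>
    rw [hermite_succ (n + 1), derivative_sub, derivative_mul, ih, derivative_mul, derivative_X,
      derivative_add, derivative_natCast, derivative_one, hermite_succ n]
    push_cast
    ring

lemma hermiteR_eq_eval (n : ℕ) :
    hermiteR n = ((hermite n).map (algebraMap ℤ ℝ)).eval :=
  funext fun x ↦ (eval_map_algebraMap _ x).symm

lemma memLp_hermiteR (n : ℕ) {q : ℝ≥0∞} (hq : q ≠ ∞) : MemLp (hermiteR n) q ν :=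
  hermiteR_eq_eval n ▸ memLp_eval_gaussianReal _ hq

lemma memLp_conjExponent_hermiteR (n : ℕ) {p : ℝ≥0∞} (hp : 1 < p) :
    MemLp (hermiteR n) p.conjExponent ν :=
  have := ENNReal.HolderConjugate.conjExponent hp.le
  memLp_hermiteR n ((ENNReal.HolderConjugate.lt_top_iff_one_lt p.conjExponent p).2 hp).ne

lemma hermiteR_succ_succ (n : ℕ) (x : ℝ) :
    hermiteR (n + 2) x = x * hermiteR (n + 1) x - (n + 1) * hermiteR n x := by
  rw [hermiteR, hermite_succ (n + 1), derivative_hermite_succ]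
  simp [hermiteR]

lemma mehlerOp_hermiteR_succ_succ {a s : ℝ} (h : a ^ 2 + s ^ 2 = 1) (n : ℕ) (x : ℝ) :
    mehlerOp a s (hermiteR (n + 2)) x = a * x * mehlerOp a s (hermiteR (n + 1)) x
      - a ^ 2 * ((n + 1) * mehlerOp a s (hermiteR n) x) := by
  have h_derivative : (derivative ((hermite (n + 1)).map (algebraMap ℤ ℝ))).eval =
      fun y ↦ (n + 1) * hermiteR n y := by
    ext y
    rw [derivative_map, derivative_hermite_succ]
    simp [hermiteR_eq_eval]
  have h_raise := mehlerOp_eval_X_mul_sub_derivative h ((hermite (n + 1)).map (algebraMap ℤ ℝ)) x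
  rw [h_derivative] at h_raise
  rw [hermiteR_eq_eval (n + 2), hermite_succ]
  simpa [derivative_map, hermiteR_eq_eval (n + 1), mehlerOp, integral_const_mul] using h_raise

lemma mehlerOp_hermiteR {a s : ℝ} (h : a ^ 2 + s ^ 2 = 1) (n : ℕ) (x : ℝ) :
    mehlerOp a s (hermiteR n) x = a ^ n * hermiteR n x := by
  induction n using Nat.twoStepInduction with
  | zero => simp [mehlerOp, hermiteR]
  | one =>
    simpa [mehlerOp, hermiteR] using mehlerOp_eval_X_mul_sub_derivative h 1 x
  | more n ih ih_succ =>
    rw [mehlerOp_hermiteR_succ_succ h, ih, ih_succ, hermiteR_succ_succ]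
    ring

lemma integrable_mehlerOp_mul_hermiteR {a s : ℝ} (h : a ^ 2 + s ^ 2 = 1) {f : ℝ → ℝ} {p : ℝ≥0∞}
    (hp : 1 < p) (hf : MemLp f p ν) (k : ℕ) :
    Integrable (fun x ↦ mehlerOp a s f x * hermiteR k x) ν :=
  have := ENNReal.HolderConjugate.conjExponent hp.le
  integrable_mehlerOp_mul h hf (memLp_conjExponent_hermiteR k hp)

lemma integral_mehlerOp_mul_hermiteR {a s : ℝ} (h : a ^ 2 + s ^ 2 = 1) {f : ℝ → ℝ} {p : ℝ≥0∞}
    (hp : 1 < p) (hf : MemLp f p ν) (k : ℕ) :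
    ∫ x, mehlerOp a s f x * hermiteR k x ∂ν = a ^ k * ∫ x, f x * hermiteR k x ∂ν := by
  have := ENNReal.HolderConjugate.conjExponent hp.le
  rw [integral_mehlerOp_mul_comm h hf (memLp_conjExponent_hermiteR k hp)]
  simp only [mehlerOp_hermiteR h, mul_left_comm (f _), integral_const_mul]

end Hermite

section OrnsteinUhlenbeck

variable {t : ℝ} {f : ℝ → ℝ} {p : ℝ≥0∞}

lemma exp_neg_sq_add_sqrt_sq (ht : 0 ≤ t) :
    Real.exp (-t) ^ 2 + Real.sqrt (1 - Real.exp (-(2 * t))) ^ 2 = 1 := by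
  have h_le : Real.exp (-(2 * t)) ≤ 1 := Real.exp_le_one_iff.2 (by linarith)
  rw [Real.sq_sqrt (sub_nonneg.2 h_le), ← Real.exp_nat_mul]
  ring_nf

lemma integrable_ouSemigroup_mul_hermiteR (ht : 0 ≤ t) (hp : 1 < p) (hf : MemLp f p ν) (k : ℕ) :
    Integrable (fun x ↦ ouSemigroup t f x * hermiteR k x) ν :=
  integrable_mehlerOp_mul_hermiteR (exp_neg_sq_add_sqrt_sq ht) hp hf k

lemma integral_ouSemigroup_mul_hermiteR (ht : 0 ≤ t) (hp : 1 < p) (hf : MemLp f p ν) (k : ℕ) :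
    ∫ x, ouSemigroup t f x * hermiteR k x ∂ν =
      Real.exp (-(k : ℝ) * t) * ∫ x, f x * hermiteR k x ∂ν := by
  have h_exp : Real.exp (-t) ^ k = Real.exp (-(k : ℝ) * t) := by
    rw [← Real.exp_nat_mul, neg_mul, mul_neg]
  rw [ouSemigroup, integral_mehlerOp_mul_hermiteR (exp_neg_sq_add_sqrt_sq ht) hp hf, h_exp]

variable {ι : Type*} [Fintype ι]

lemma integral_sum_ouSemigroup_mul_hermiteR {t : ι → ℝ} (ht : ∀ l, 0 ≤ t l) (b : ι → ℝ)
    (hp : 1 < p) (hf : MemLp f p ν) (k : ℕ) :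
    ∫ x, (∑ l, b l * ouSemigroup (t l) f x) * hermiteR k x ∂ν =
      (∑ l, b l * Real.exp (-(k : ℝ) * t l)) * ∫ x, f x * hermiteR k x ∂ν := by
  simp only [Finset.sum_mul, mul_assoc]
  rw [integral_finsetSum _ fun l _ ↦
    (integrable_ouSemigroup_mul_hermiteR (ht l) hp hf k).const_mul (b l)]
  simp only [integral_const_mul, integral_ouSemigroup_mul_hermiteR (ht _) hp hf]

lemma abs_sum_ouSemigroup_le {K : ℝ} (hf : ∀ x, |f x| ≤ K) (t b : ι → ℝ) (x : ℝ) :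
    |∑ l, b l * ouSemigroup (t l) f x| ≤ K * ∑ l, |b l| :=
  calc |∑ l, b l * ouSemigroup (t l) f x|
      ≤ ∑ l, |b l * ouSemigroup (t l) f x| := Finset.abs_sum_le_sum_abs _ _
    _ ≤ ∑ l, K * |b l| := by
        gcongr with l
        rw [abs_mul, mul_comm]
        gcongr
        exact abs_mehlerOp_le hf _ _ x
    _ = K * ∑ l, |b l| := (Finset.mul_sum ..).symm

end OrnsteinUhlenbeck

theorem ou_combination_hermite_rank_general {ι : Type*} [Fintype ι]
    (m : ℕ) (t : ι → ℝ) (ht0 : ∀ l, 0 ≤ t l) (b : ι → ℝ)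
    (hb0 : ∀ k : ℕ, k < m → ∑ l, b l * Real.exp (-(k : ℝ) * t l) = 0)
    (hb1 : ∑ l, b l * Real.exp (-(m : ℝ) * t l) = 1)
    (ψ : ℝ → ℝ) (hψmeas : AEStronglyMeasurable ψ ν) (Kψ : ℝ) (hψbdd : ∀ x, |ψ x| ≤ Kψ)
    (Φ : ℝ → ℝ) (hΦ : ∀ x, Φ x = ∑ l, b l * ouSemigroup (t l) ψ x) :
    (∀ x, |Φ x| ≤ Kψ * ∑ l, |b l|) ∧
    (∀ k : ℕ, ∫ x, Φ x * hermiteR k x ∂ν =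
        (∑ l, b l * Real.exp (-(k : ℝ) * t l)) * ∫ x, ψ x * hermiteR k x ∂ν) ∧
    (∀ k : ℕ, k < m → ∫ x, Φ x * hermiteR k x ∂ν = 0) ∧
    (∫ x, Φ x * hermiteR m x ∂ν = ∫ x, ψ x * hermiteR m x ∂ν) ∧
    ((∫ x, ψ x * hermiteR m x ∂ν) ≠ 0 →
      (∀ k : ℕ, k < m → ∫ x, Φ x * hermiteR k x ∂ν = 0) ∧
        (∫ x, Φ x * hermiteR m x ∂ν) ≠ 0) := by
  obtain rfl : Φ = fun x ↦ ∑ l, b l * ouSemigroup (t l) ψ x := funext hΦ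
  have hψ : MemLp ψ ∞ ν := memLp_top_of_bound hψmeas Kψ (ae_of_all _ hψbdd)
  have h_coeff := integral_sum_ouSemigroup_mul_hermiteR ht0 b ENNReal.one_lt_top hψ
  have h_below (k : ℕ) (hk : k < m) :
      ∫ x, (∑ l, b l * ouSemigroup (t l) ψ x) * hermiteR k x ∂ν = 0 := by
    rw [h_coeff, hb0 k hk, zero_mul]
  have h_rank : ∫ x, (∑ l, b l * ouSemigroup (t l) ψ x) * hermiteR m x ∂ν =
      ∫ x, ψ x * hermiteR m x ∂ν := by
    rw [h_coeff, hb1, one_mul]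
  exact ⟨abs_sum_ouSemigroup_le hψbdd t b, h_coeff, h_below, h_rank,
    fun h_ne ↦ ⟨h_below, h_rank.trans_ne h_ne⟩⟩

/-- Construction of a bounded function of Hermite rank `m` via the Ornstein–Uhlenbeck
semigroup: with `Φ = Σ_l b_l P_{t_l} ψ`, one has `‖Φ‖_∞ ≤ ‖ψ‖_∞ Σ_l |b_l|`,
`∫ Φ H_k dν = (Σ_l b_l e^{-k t_l}) ∫ ψ H_k dν` for every `k`; in particular
`∫ Φ H_k dν = 0` for `k < m`, `∫ Φ H_m dν = ∫ ψ H_m dν`, and if `∫ ψ H_m dν ≠ 0`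
then `Φ` has Hermite rank `m`. -/
theorem ou_combination_hermite_rank
    (m : ℕ) (hm : 1 ≤ m) (t : Fin (m + 1) → ℝ) (ht0 : ∀ l, 0 ≤ t l) (htmono : StrictMono t)
    (b : Fin (m + 1) → ℝ)
    (hb0 : ∀ k : ℕ, k < m → ∑ l, b l * Real.exp (-(k : ℝ) * t l) = 0)
    (hb1 : ∑ l, b l * Real.exp (-(m : ℝ) * t l) = 1)
    (ψ : ℝ → ℝ) (hψmeas : Measurable ψ) (Kψ : ℝ) (hψbdd : ∀ x, |ψ x| ≤ Kψ)
    (Φ : ℝ → ℝ)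
    (hΦ : ∀ x, Φ x = ∑ l, b l *
      ∫ y, ψ (Real.exp (-t l) * x + Real.sqrt (1 - Real.exp (-(2 * t l))) * y) ∂stdGaussian) :
    (∀ x, |Φ x| ≤ Kψ * ∑ l, |b l|) ∧
    (∀ k : ℕ, ∫ x, Φ x * hermiteR k x ∂stdGaussian =
        (∑ l, b l * Real.exp (-(k : ℝ) * t l)) * ∫ x, ψ x * hermiteR k x ∂stdGaussian) ∧
    (∀ k : ℕ, k < m → ∫ x, Φ x * hermiteR k x ∂stdGaussian = 0) ∧
    (∫ x, Φ x * hermiteR m x ∂stdGaussian = ∫ x, ψ x * hermiteR m x ∂stdGaussian) ∧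
    ((∫ x, ψ x * hermiteR m x ∂stdGaussian) ≠ 0 →
      (∀ k : ℕ, k < m → ∫ x, Φ x * hermiteR k x ∂stdGaussian = 0) ∧
        (∫ x, Φ x * hermiteR m x ∂stdGaussian) ≠ 0) := by
  exact ou_combination_hermite_rank_general m t ht0 b hb0 hb1 ψ hψmeas.aestronglyMeasurable Kψ hψbdd
    Φ hΦ

end
end

section
/- Let (Ω, 𝓕, P) be a probability space, m ≥ 1 an integer, H ∈ (1/2, 1), and let L : (0,∞) → (0,∞) be slowly varying at +∞ and bounded away from 0 and +∞ on every compact subset of (0,∞). Let q : ℝ × Ω → ℝ be jointly measurable and uniformly bounded with |E[ q(s, ·) q(t, ·) ]| ≤ C₁ L(|t − s|)^{2m} |t − s|^{−2(1 − H)} for all s ≠ t and some constant C₁. Let F₁, F₂ : [0,1] → ℝ be bounded measurable, set 𝔛(ε) = ε^{1 − H} L(1/ε)^m, and define for x ∈ [0,1] the random variable 𝓤^ε(x) = (1/𝔛(ε)) ∫_0^1 [ F₁(y) 1_{[0,x]}(y) + x F₂(y) ] q(y/ε, ·) dy. Then for every ζ ∈ (0,1) and every β > 0 with 2mβ + 2(1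 − H) < 1 there exists a constant C such that for all 0 ≤ u < v ≤ 1 and all ε ∈ (0, ζ), E[ |𝓤^ε(u) − 𝓤^ε(v)|² ] ≤ C ( (v − u)^{2 − 2mβ − 2(1 − H)} + (v − u)² ). In particular, since 2 − 2mβ − 2(1 − H) > 1, the family (𝓤^ε)_{ε ∈ (0, ζ)} satisfies Kolmogorov's tightness criterion on C([0,1]). -/
open MeasureTheory Filter Set
open scoped Topology

noncomputable section

/-- `L : (0,∞) → (0,∞)` is slowly varying at `+∞`. -/
def SlowlyVaryingAtTop (L : ℝ → ℝ) : Prop :=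
  ∀ lam : ℝ, 0 < lam → Tendsto (fun x => L (lam * x) / L x) atTop (𝓝 1)

/-- `L` is bounded away from `0` and `+∞` on every compact subset of `(0,∞)`. -/
def BddAwayOnCompacts (L : ℝ → ℝ) : Prop :=
  ∀ K : Set ℝ, K ⊆ Set.Ioi 0 → IsCompact K →
    ∃ c C : ℝ, 0 < c ∧ ∀ x ∈ K, c ≤ L x ∧ L x ≤ C

/-!
Write `α = 2mβ + 2(1 - H) < 1`. Karamata's uniform convergence theorem for `log ∘ L ^ (2m) ∘ exp`
gives Potter's bound `L(x) ^ (2m) ≤ A (y / x) ^ (2mβ) L(y) ^ (2m)` for `1 ≤ x ≤ y`. Together with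
the boundedness of `q` near the diagonal, it turns the covariance hypothesis into
`|E[q(y/ε) q(z/ε)]| ≤ B 𝔛(ε)² |y - z| ^ (-α)` on `[0, 1]²`, uniformly in `ε ≤ 1`. By Fubini, and
since `|y - z| ^ (-α)` is integrable, the second moment of `∫ᵤᵛ F(y) q(y/ε) dy` is then
`O(𝔛(ε)² (v - u) ^ (2 - α))` for bounded `F`, and the increment of the corrector splits as
`(∫ᵤᵛ F₁ q + (v - u) ∫₀¹ F₂ q) / 𝔛(ε)`.
-/

section UniformConvergence

/-- The increment of `h` from `x` to `x + t`, truncated at `1` so that dominated convergence in `t`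
needs no integrability of `h`. -/
def truncIncrement (h : ℝ → ℝ) (x t : ℝ) : ℝ :=
  min 1 |h (x + t) - h x|

variable {h : ℝ → ℝ}

lemma truncIncrement_nonneg (h : ℝ → ℝ) (x t : ℝ) : 0 ≤ truncIncrement h x t :=
  le_min zero_le_one (abs_nonneg _)

lemma norm_truncIncrement_le_one (h : ℝ → ℝ) (x t : ℝ) : ‖truncIncrement h x t‖ ≤ 1 := by
  rw [Real.norm_of_nonneg (truncIncrement_nonneg h x t)]
  exact min_le_left _ _

lemma min_one_add_le {a b : ℝ} (ha : 0 ≤ a) (hb : 0 ≤ b) :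
    min 1 (a + b) ≤ min 1 a + min 1 b := by
  grind

lemma truncIncrement_triangle (h : ℝ → ℝ) (x u t : ℝ) :
    truncIncrement h x u ≤ truncIncrement h x t + truncIncrement h (x + u) (t - u) := by
  have htriangle : |h (x + u) - h x| ≤ |h (x + t) - h x| + |h (x + t) - h (x + u)| := by
    rw [abs_sub_comm (h (x + t)) (h (x + u)), add_comm |h (x + t) - h x|]
    exact abs_sub_le _ _ _
  calc truncIncrement h x u
      ≤ min 1 (|h (x + t) - h x| + |h (x + t) - h (x + u)|) := min_le_min_left 1 htriangle
    _ ≤ min 1 |h (x + t) - h x| + min 1 |h (x + t) - h (x + u)| :=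
        min_one_add_le (abs_nonneg _) (abs_nonneg _)
    _ = truncIncrement h x t + truncIncrement h (x + u) (t - u) := by
        rw [truncIncrement, truncIncrement, add_add_sub_cancel]

lemma measurable_truncIncrement (hmeas : Measurable h) (x : ℝ) :
    Measurable (truncIncrement h x) := by
  unfold truncIncrement
  fun_prop

lemma intervalIntegrable_truncIncrement (hmeas : Measurable h) (x a b : ℝ) :
    IntervalIntegrable (truncIncrement h x) volume a b :=
  (intervalIntegrable_const (c := (1 : ℝ))).mono_fun
    (measurable_truncIncrement hmeas x).aestronglyMeasurable
    (.of_forall fun t => by simpa using norm_truncIncrement_le_one h x t)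

lemma tendsto_integral_truncIncrement (hmeas : Measurable h)
    (hincr : ∀ t, Tendsto (fun x => h (x + t) - h x) atTop (𝓝 0)) (a b : ℝ) :
    Tendsto (fun x => ∫ t in a..b, truncIncrement h x t) atTop (𝓝 0) := by
  have hpointwise (t : ℝ) : Tendsto (fun x => truncIncrement h x t) atTop (𝓝 0) := by
    simpa [truncIncrement] using (tendsto_const_nhds (x := (1 : ℝ))).min (hincr t).abs
  simpa using intervalIntegral.tendsto_integral_filter_of_dominated_convergence (μ := volume)
    (fun _ => (1 : ℝ))
    (.of_forall fun x => (measurable_truncIncrement hmeas x).aestronglyMeasurable)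
    (.of_forall fun x => .of_forall fun t _ => norm_truncIncrement_le_one h x t)
    intervalIntegrable_const (.of_forall fun t _ => hpointwise t)

-- Average the triangle inequality through `x + t` over the intermediate points `t ∈ [T, T + 1]`.
lemma truncIncrement_le_integral_add_integral (hmeas : Measurable h) {T u : ℝ}
    (hu : u ∈ Icc (-T) T) (x : ℝ) :
    truncIncrement h x u ≤ (∫ t in 0..(2 * T + 1), truncIncrement h x t) +
      ∫ t in 0..(2 * T + 1), truncIncrement h (x + u) t := by
  obtain ⟨hTu, huT⟩ := hu
  have hshift :
      IntervalIntegrable (fun t => truncIncrement h (x + u) (t - u)) volume T (T + 1) := by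
    simpa using
      (intervalIntegrable_truncIncrement hmeas (x + u) (T - u) (T + 1 - u)).comp_sub_right u
  have henlarge (y c d : ℝ) (hc : 0 ≤ c) (hcd : c ≤ d) (hd : d ≤ 2 * T + 1) :
      ∫ t in c..d, truncIncrement h y t ≤ ∫ t in 0..(2 * T + 1), truncIncrement h y t :=
    intervalIntegral.integral_mono_interval hc hcd hd
      (.of_forall fun t => truncIncrement_nonneg h y t)
      (intervalIntegrable_truncIncrement hmeas y _ _)
  calc truncIncrement h x u
      = ∫ _ in T..(T + 1), truncIncrement h x u := by simp
    _ ≤ ∫ t in T..(T + 1), (truncIncrement h x t + truncIncrement h (x + u) (t - u)) :=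
        intervalIntegral.integral_mono_on (by linarith) intervalIntegrable_const
          ((intervalIntegrable_truncIncrement hmeas x _ _).add hshift)
          fun t _ => truncIncrement_triangle h x u t
    _ = (∫ t in T..(T + 1), truncIncrement h x t) +
          ∫ t in (T - u)..(T + 1 - u), truncIncrement h (x + u) t := by
        rw [intervalIntegral.integral_add (intervalIntegrable_truncIncrement hmeas x _ _) hshift,
          intervalIntegral.integral_comp_sub_right (truncIncrement h (x + u))]
    _ ≤ _ := add_le_add (henlarge x _ _ (by linarith) (by linarith) (by linarith))
        (henlarge (x + u) _ _ (by linarith) (by linarith) (by linarith))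

theorem tendstoUniformlyOn_increment_of_tendsto (hmeas : Measurable h)
    (hincr : ∀ t, Tendsto (fun x => h (x + t) - h x) atTop (𝓝 0)) (T : ℝ) :
    TendstoUniformlyOn (fun x t => h (x + t) - h x) 0 atTop (Icc (-T) T) := by
  refine Metric.tendstoUniformlyOn_iff.2 fun δ hδ => ?_
  have hsmall : ∀ᶠ x in atTop, ∫ t in 0..(2 * T + 1), truncIncrement h x t < min 1 δ / 2 :=
    (tendsto_integral_truncIncrement hmeas hincr _ _).eventually_lt_const (by positivity)
  obtain ⟨x₀, hx₀⟩ := eventually_atTop.1 hsmall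
  filter_upwards [eventually_ge_atTop x₀, eventually_ge_atTop (x₀ + T)] with x hx hxT u hu
  have hlt : min 1 |h (x + u) - h x| < min 1 δ := by
    have hbound := truncIncrement_le_integral_add_integral hmeas hu x
    rw [truncIncrement] at hbound
    linarith [hx₀ x hx, hx₀ (x + u) (by linarith [hu.1])]
  rw [Pi.zero_apply, dist_zero_left, Real.norm_eq_abs]
  grind

end UniformConvergence

section Growth

variable {h : ℝ → ℝ} {β x₀ : ℝ}

lemma sub_le_mul_natCast_of_unit_step (hstep : ∀ x ≥ x₀, h x - h (x + 1) ≤ β) {x : ℝ}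
    (hx : x₀ ≤ x) (n : ℕ) : h x - h (x + n) ≤ β * n := by
  induction n with
  | zero => simp
  | succ k ih =>
    have hlast := hstep (x + k) (by linarith [k.cast_nonneg (α := ℝ)])
    push_cast
    rw [← add_assoc]
    linarith

lemma sub_le_mul_sub_add_of_unit_step (hstep : ∀ x ≥ x₀, ∀ u ∈ Icc (0 : ℝ) 1, h x - h (x + u) ≤ β)
    {x y : ℝ} (hx : x₀ ≤ x) (hxy : x ≤ y) : h x - h y ≤ β * (y - x) + β := by
  have hβ : 0 ≤ β := by simpa using hstep x₀ le_rfl 0 (by simp)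
  set n := ⌊y - x⌋₊
  have hn : (n : ℝ) ≤ y - x := Nat.floor_le (sub_nonneg.2 hxy)
  have hn' : y - x < n + 1 := Nat.lt_floor_add_one (y - x)
  have hinteger : h x - h (x + n) ≤ β * n :=
    sub_le_mul_natCast_of_unit_step (fun x hx => hstep x hx 1 (by simp)) hx n
  have hfraction : h (x + n) - h y ≤ β := by
    have := hstep (x + n) (by linarith [n.cast_nonneg (α := ℝ)]) (y - x - n)
      ⟨by linarith, by linarith⟩
    rwa [show x + n + (y - x - n) = y by ring] at this
  linarith [mul_le_mul_of_nonneg_left hn hβ]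

lemma exists_sub_le_mul_sub_add_of_abs_le_on_Icc (hβ : 0 ≤ β)
    (hgrowth : ∀ x y, x₀ ≤ x → x ≤ y → h x - h y ≤ β * (y - x) + β)
    (hbdd : ∀ a b, ∃ M, ∀ x ∈ Icc a b, |h x| ≤ M) (a : ℝ) :
    ∃ A, ∀ x y, a ≤ x → x ≤ y → h x - h y ≤ β * (y - x) + A := by
  obtain ⟨M, hM⟩ := hbdd a (max a x₀)
  have hle (x y : ℝ) (hx : x ∈ Icc a (max a x₀)) (hy : y ∈ Icc a (max a x₀)) :
      h x - h y ≤ 2 * M := by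
    linarith [(abs_le.1 (hM x hx)).2, (abs_le.1 (hM y hy)).1]
  have hM0 : 0 ≤ M := (abs_nonneg _).trans (hM a (by simp))
  refine ⟨2 * M + β, fun x y hax hxy => ?_⟩
  rcases le_total (max a x₀) x with hx | hx
  · linarith [hgrowth x y ((le_max_right _ _).trans hx) hxy]
  rcases le_total (max a x₀) y with hy | hy
  · linarith [hle x (max a x₀) ⟨hax, hx⟩ (by simp), hgrowth _ y (le_max_right a x₀) hy,
      mul_le_mul_of_nonneg_left hx hβ]
  · linarith [hle x y ⟨hax, hx⟩ ⟨hax.trans hxy, hy⟩, mul_le_mul_of_nonneg_left hxy hβ]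

end Growth

namespace BddAwayOnCompacts

variable {L : ℝ → ℝ}

lemma pos (hL : BddAwayOnCompacts L) {x : ℝ} (hx : 0 < x) : 0 < L x := by
  obtain ⟨c, C, hc, hcC⟩ := hL {x} (by simpa using hx) isCompact_singleton
  exact hc.trans_le (hcC x rfl).1

lemma pow (hL : BddAwayOnCompacts L) (n : ℕ) : BddAwayOnCompacts (fun x => L x ^ n) := by
  intro K hK hKc
  obtain ⟨c, C, hc, hcC⟩ := hL K hK hKc
  exact ⟨c ^ n, C ^ n, pow_pos hc n, fun x hx =>
    ⟨pow_le_pow_left₀ hc.le (hcC x hx).1 n,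
      pow_le_pow_left₀ (hc.le.trans (hcC x hx).1) (hcC x hx).2 n⟩⟩

lemma exists_abs_log_comp_exp_le (hL : BddAwayOnCompacts L) (a b : ℝ) :
    ∃ M, ∀ x ∈ Icc a b, |Real.log (L (Real.exp x))| ≤ M := by
  obtain ⟨c, C, hc, hcC⟩ := hL (Real.exp '' Icc a b)
    (by rintro _ ⟨x, -, rfl⟩; exact Real.exp_pos x) (isCompact_Icc.image Real.continuous_exp)
  refine ⟨max |Real.log c| |Real.log C|, fun x hx => ?_⟩
  obtain ⟨hcL, hLC⟩ := hcC _ (mem_image_of_mem _ hx)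
  exact abs_le_max_abs_abs (Real.log_le_log hc hcL) (Real.log_le_log (hc.trans_le hcL) hLC)

end BddAwayOnCompacts

namespace SlowlyVaryingAtTop

variable {L : ℝ → ℝ}

lemma pow (hL : SlowlyVaryingAtTop L) (n : ℕ) : SlowlyVaryingAtTop (fun x => L x ^ n) := by
  intro lam hlam
  simpa only [div_pow, one_pow] using (hL lam hlam).pow n

lemma tendsto_log_comp_exp_add_sub (hL : SlowlyVaryingAtTop L) (t : ℝ) :
    Tendsto (fun x => Real.log (L (Real.exp (x + t))) - Real.log (L (Real.exp x)))
      atTop (𝓝 0) := by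
  have hratio : Tendsto (fun x => L (Real.exp (x + t)) / L (Real.exp x)) atTop (𝓝 1) := by
    simpa only [Function.comp_def, ← Real.exp_add, add_comm t] using
      (hL (Real.exp t) (Real.exp_pos t)).comp Real.tendsto_exp_atTop
  rw [← Real.log_one]
  refine (hratio.log one_ne_zero).congr' ?_
  filter_upwards [hratio.eventually_ne one_ne_zero] with x hx
  exact Real.log_div (div_ne_zero_iff.1 hx).1 (div_ne_zero_iff.1 hx).2

lemma exists_log_comp_exp_sub_le (hL : SlowlyVaryingAtTop L) (hmeas : Measurable L)
    (hbdd : BddAwayOnCompacts L) {β : ℝ} (hβ : 0 < β) (a : ℝ) :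
    ∃ A, ∀ x y, a ≤ x → x ≤ y →
      Real.log (L (Real.exp x)) - Real.log (L (Real.exp y)) ≤ β * (y - x) + A := by
  set h : ℝ → ℝ := fun x => Real.log (L (Real.exp x))
  have hunif := tendstoUniformlyOn_increment_of_tendsto
    (h := h) (by fun_prop) hL.tendsto_log_comp_exp_add_sub 1
  obtain ⟨x₀, hx₀⟩ := eventually_atTop.1 (Metric.tendstoUniformlyOn_iff.1 hunif β hβ)
  refine exists_sub_le_mul_sub_add_of_abs_le_on_Icc (h := h) (x₀ := x₀) hβ.le
    (fun x y hx hxy => ?_) hbdd.exists_abs_log_comp_exp_le a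
  refine sub_le_mul_sub_add_of_unit_step (h := h) (fun x hx u hu => ?_) hx hxy
  have hdist := hx₀ x hx u ⟨by linarith [hu.1], hu.2⟩
  rw [Pi.zero_apply, dist_zero_left, Real.norm_eq_abs] at hdist
  linarith [(abs_lt.1 hdist).1]

theorem potter_bound (hL : SlowlyVaryingAtTop L) (hmeas : Measurable L)
    (hbdd : BddAwayOnCompacts L) {β a : ℝ} (hβ : 0 < β) (ha : 0 < a) :
    ∃ A, 0 < A ∧ ∀ x y, a ≤ x → x ≤ y → L x ≤ A * (y / x) ^ β * L y := by
  obtain ⟨A, hA⟩ := hL.exists_log_comp_exp_sub_le hmeas hbdd hβ (Real.log a)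
  refine ⟨Real.exp A, Real.exp_pos A, fun x y hax hxy => ?_⟩
  have hx : 0 < x := ha.trans_le hax
  have hy : 0 < y := hx.trans_le hxy
  have hlog := hA (Real.log x) (Real.log y) (Real.log_le_log ha hax) (Real.log_le_log hx hxy)
  rw [Real.exp_log hx, Real.exp_log hy] at hlog
  have hLy := hbdd.pos hy
  rw [← Real.log_le_log_iff (hbdd.pos hx) (by positivity), Real.log_mul (by positivity) hLy.ne',
    Real.log_mul (by positivity) (by positivity), Real.log_exp, Real.log_rpow (by positivity),
    Real.log_div hy.ne' hx.ne']
  linarith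

end SlowlyVaryingAtTop

section RieszKernel

variable {r : ℝ}

lemma intervalIntegrable_abs_rpow (hr : -1 < r) (a b : ℝ) :
    IntervalIntegrable (fun z : ℝ => |z| ^ r) volume a b := by
  refine intervalIntegrable_of_even (fun z => by rw [abs_neg]) fun c hc => ?_
  refine (intervalIntegral.intervalIntegrable_rpow' hr).congr fun z hz => ?_
  rw [uIoc_of_le hc.le] at hz
  simp only [abs_of_pos hz.1]

lemma intervalIntegrable_abs_sub_rpow (hr : -1 < r) (y a b : ℝ) :
    IntervalIntegrable (fun z => |y - z| ^ r) volume a b := by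
  simpa using (intervalIntegrable_abs_rpow hr (y - a) (y - b)).comp_sub_left y

lemma integral_abs_rpow_of_nonneg (hr : -1 < r) {c : ℝ} (hc : 0 ≤ c) :
    ∫ z in 0..c, |z| ^ r = c ^ (r + 1) / (r + 1) := by
  have habs : ∫ z in 0..c, |z| ^ r = ∫ z in 0..c, z ^ r := by
    refine intervalIntegral.integral_congr fun z hz => ?_
    rw [uIcc_of_le hc] at hz
    simp only [abs_of_nonneg hz.1]
  rw [habs, integral_rpow (Or.inl hr), Real.zero_rpow (by linarith), sub_zero]

lemma integral_abs_sub_rpow (hr : -1 < r) {a b y : ℝ} (hy : y ∈ Icc a b) :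
    ∫ z in a..b, |y - z| ^ r = ((b - y) ^ (r + 1) + (y - a) ^ (r + 1)) / (r + 1) := by
  have hleft : ∫ z in (y - b)..0, |z| ^ r = ∫ z in 0..(b - y), |z| ^ r := by
    simpa using (intervalIntegral.integral_comp_neg (a := 0) (b := b - y) fun z => |z| ^ r).symm
  rw [intervalIntegral.integral_comp_sub_left (fun z => |z| ^ r),
    ← intervalIntegral.integral_add_adjacent_intervals (intervalIntegrable_abs_rpow hr _ 0)
      (intervalIntegrable_abs_rpow hr 0 _), hleft,
    integral_abs_rpow_of_nonneg hr (sub_nonneg.2 hy.2),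
    integral_abs_rpow_of_nonneg hr (sub_nonneg.2 hy.1), add_div]

lemma integral_abs_sub_rpow_le (hr : -1 < r) {a b y : ℝ} (hy : y ∈ Icc a b) :
    ∫ z in a..b, |y - z| ^ r ≤ 2 / (r + 1) * (b - a) ^ (r + 1) := by
  obtain ⟨hay, hyb⟩ := hy
  have hr1 : 0 < r + 1 := by linarith
  calc ∫ z in a..b, |y - z| ^ r
      = ((b - y) ^ (r + 1) + (y - a) ^ (r + 1)) / (r + 1) := integral_abs_sub_rpow hr ⟨hay, hyb⟩
    _ ≤ ((b - a) ^ (r + 1) + (b - a) ^ (r + 1)) / (r + 1) := by gcongr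
    _ = 2 / (r + 1) * (b - a) ^ (r + 1) := by ring

end RieszKernel

section SecondMoment

section Fubini

variable {T : Type*} [MeasurableSpace T] {μ : Measure T}

lemma sq_integral_eq_integral_prod [SFinite μ] (f : T → ℝ) :
    (∫ y, f y ∂μ) ^ 2 = ∫ x, f x.1 * f x.2 ∂μ.prod μ := by
  rw [sq, integral_prod_mul f f]

variable {Ω : Type*} [MeasurableSpace Ω] {P : Measure Ω} {G : T × Ω → ℝ}

lemma integrable_sq_integral [SFinite μ] [SFinite P]
    (hG : Integrable (fun x : (T × T) × Ω => G (x.1.1, x.2) * G (x.1.2, x.2))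
      ((μ.prod μ).prod P)) :
    Integrable (fun ω => (∫ y, G (y, ω) ∂μ) ^ 2) P := by
  simpa only [sq_integral_eq_integral_prod] using hG.integral_prod_right

lemma integral_sq_integral [SFinite μ] [SFinite P]
    (hG : Integrable (fun x : (T × T) × Ω => G (x.1.1, x.2) * G (x.1.2, x.2))
      ((μ.prod μ).prod P)) :
    ∫ ω, (∫ y, G (y, ω) ∂μ) ^ 2 ∂P = ∫ y, ∫ z, ∫ ω, G (y, ω) * G (z, ω) ∂P ∂μ ∂μ := by
  simp only [sq_integral_eq_integral_prod]
  rw [← integral_integral_swap (f := fun (x : T × T) ω => G (x.1, ω) * G (x.2, ω)) hG]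
  exact integral_prod _ hG.integral_prod_left

lemma integrable_mul_prod_of_bounded [IsFiniteMeasure μ] [IsFiniteMeasure P] (hG : Measurable G)
    {B : ℝ} (hB : ∀ᵐ y ∂μ, ∀ ω, |G (y, ω)| ≤ B) :
    Integrable (fun x : (T × T) × Ω => G (x.1.1, x.2) * G (x.1.2, x.2))
      ((μ.prod μ).prod P) := by
  refine Integrable.of_bound (by fun_prop) (B * B) ?_
  have hfst : ∀ᵐ x ∂(μ.prod μ).prod P, ∀ ω, |G (x.1.1, ω)| ≤ B :=
    (Measure.quasiMeasurePreserving_fst.comp Measure.quasiMeasurePreserving_fst).ae hB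
  have hsnd : ∀ᵐ x ∂(μ.prod μ).prod P, ∀ ω, |G (x.1.2, ω)| ≤ B :=
    (Measure.quasiMeasurePreserving_snd.comp Measure.quasiMeasurePreserving_fst).ae hB
  filter_upwards [hfst, hsnd] with x h₁ h₂
  rw [norm_mul]
  exact mul_le_mul (h₁ _) (h₂ _) (norm_nonneg _) ((abs_nonneg _).trans (h₁ x.2))

end Fubini

variable {Ω : Type*} [MeasurableSpace Ω] {P : Measure Ω} [IsFiniteMeasure P]
  {G : ℝ × Ω → ℝ} {a b B D r : ℝ}

lemma integrable_mul_prod_restrict_Ioc (hG : Measurable G)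
    (hB : ∀ y ∈ Ioc a b, ∀ ω, |G (y, ω)| ≤ B) :
    Integrable (fun x : (ℝ × ℝ) × Ω => G (x.1.1, x.2) * G (x.1.2, x.2))
      (((volume.restrict (Ioc a b)).prod (volume.restrict (Ioc a b))).prod P) :=
  integrable_mul_prod_of_bounded hG (ae_restrict_of_forall_mem measurableSet_Ioc hB)

lemma integrable_sq_intervalIntegral (hab : a ≤ b) (hG : Measurable G)
    (hB : ∀ y ∈ Ioc a b, ∀ ω, |G (y, ω)| ≤ B) :
    Integrable (fun ω => (∫ y in a..b, G (y, ω)) ^ 2) P := by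
  simpa only [intervalIntegral.integral_of_le hab] using
    integrable_sq_integral (integrable_mul_prod_restrict_Ioc hG hB)

theorem integral_sq_intervalIntegral_le (hr : -1 < r) (hab : a ≤ b) (hG : Measurable G)
    (hB : ∀ y ∈ Ioc a b, ∀ ω, |G (y, ω)| ≤ B) (hD : 0 ≤ D)
    (hcov : ∀ y ∈ Ioc a b, ∀ z ∈ Ioc a b, y ≠ z →
      |∫ ω, G (y, ω) * G (z, ω) ∂P| ≤ D * |y - z| ^ r) :
    ∫ ω, (∫ y in a..b, G (y, ω)) ^ 2 ∂P ≤ D * (2 / (r + 1)) * (b - a) ^ (r + 2) := by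
  have hinner (y : ℝ) (hy : y ∈ Ioc a b) :
      ‖∫ z in a..b, ∫ ω, G (y, ω) * G (z, ω) ∂P‖ ≤ D * (2 / (r + 1) * (b - a) ^ (r + 1)) := by
    have hoffdiag : ∀ᵐ z, z ∈ Ioc a b → ‖∫ ω, G (y, ω) * G (z, ω) ∂P‖ ≤ D * |y - z| ^ r := by
      filter_upwards [Measure.ae_ne volume y] with z hzy hz
      exact hcov y hy z hz hzy.symm
    calc ‖∫ z in a..b, ∫ ω, G (y, ω) * G (z, ω) ∂P‖
        ≤ ∫ z in a..b, D * |y - z| ^ r :=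
          intervalIntegral.norm_integral_le_of_norm_le hab hoffdiag
            ((intervalIntegrable_abs_sub_rpow hr y a b).const_mul D)
      _ ≤ D * (2 / (r + 1) * (b - a) ^ (r + 1)) := by
          rw [intervalIntegral.integral_const_mul]
          gcongr
          exact integral_abs_sub_rpow_le hr (Ioc_subset_Icc_self hy)
  have hpow : (b - a) ^ (r + 2) = (b - a) ^ (r + 1) * (b - a) := by
    rw [show r + 2 = r + 1 + 1 by ring, Real.rpow_add_one' (sub_nonneg.2 hab) (by linarith)]
  calc ∫ ω, (∫ y in a..b, G (y, ω)) ^ 2 ∂P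
      = ∫ y in a..b, ∫ z in a..b, ∫ ω, G (y, ω) * G (z, ω) ∂P := by
        simp only [intervalIntegral.integral_of_le hab]
        exact integral_sq_integral (integrable_mul_prod_restrict_Ioc hG hB)
    _ ≤ ‖∫ y in a..b, ∫ z in a..b, ∫ ω, G (y, ω) * G (z, ω) ∂P‖ := Real.le_norm_self _
    _ ≤ D * (2 / (r + 1) * (b - a) ^ (r + 1)) * |b - a| :=
        intervalIntegral.norm_integral_le_of_norm_le_const (by rwa [uIoc_of_le hab])
    _ = D * (2 / (r + 1)) * (b - a) ^ (r + 2) := by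
        rw [abs_of_nonneg (sub_nonneg.2 hab), hpow]
        ring

end SecondMoment

section Rescaling

variable {ℓ : ℝ → ℝ} {A γ δ ε ρ : ℝ}

lemma mul_rpow_neg_le_of_potter (hpotter : ∀ x y, 1 ≤ x → x ≤ y → ℓ x ≤ A * (y / x) ^ δ * ℓ y)
    (hε : 0 < ε) (hερ : ε ≤ ρ) (hρ : ρ ≤ 1) :
    ℓ (ρ / ε) * (ρ / ε) ^ (-γ) ≤ A * (ε ^ γ * ℓ (1 / ε)) * ρ ^ (-(δ + γ)) := by
  have hρ0 : 0 < ρ := hε.trans_le hερ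
  have hratio : 1 / ε / (ρ / ε) = ρ⁻¹ := by field_simp
  have hℓ := hpotter (ρ / ε) (1 / ε) ((one_le_div hε).2 hερ) (by gcongr)
  rw [hratio, Real.inv_rpow hρ0.le, ← Real.rpow_neg hρ0.le] at hℓ
  calc ℓ (ρ / ε) * (ρ / ε) ^ (-γ)
      ≤ A * ρ ^ (-δ) * ℓ (1 / ε) * (ρ / ε) ^ (-γ) := by gcongr
    _ = A * (ε ^ γ * ℓ (1 / ε)) * (ρ ^ (-δ) * ρ ^ (-γ)) := by
        rw [Real.div_rpow hρ0.le hε.le, Real.rpow_neg hε.le, div_inv_eq_mul]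
        ring
    _ = A * (ε ^ γ * ℓ (1 / ε)) * ρ ^ (-(δ + γ)) := by
        rw [← Real.rpow_add hρ0, neg_add]

lemma apply_one_le_of_potter (hpotter : ∀ x y, 1 ≤ x → x ≤ y → ℓ x ≤ A * (y / x) ^ δ * ℓ y)
    (hA : 0 ≤ A) (hδγ : 0 ≤ δ + γ) (hρ : 0 < ρ) (hρε : ρ ≤ ε) (hε : ε ≤ 1)
    (hℓ : 0 ≤ ℓ (1 / ε)) :
    ℓ 1 ≤ A * (ε ^ γ * ℓ (1 / ε)) * ρ ^ (-(δ + γ)) := by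
  have hε0 : 0 < ε := hρ.trans_le hρε
  calc ℓ 1 ≤ A * (1 / ε / 1) ^ δ * ℓ (1 / ε) := hpotter 1 (1 / ε) le_rfl ((one_le_div hε0).2 hε)
    _ = A * (ε ^ γ * ℓ (1 / ε)) * ε ^ (-(δ + γ)) := by
        rw [div_one, one_div, Real.inv_rpow hε0.le, ← Real.rpow_neg hε0.le,
          show -δ = γ + -(δ + γ) by ring, Real.rpow_add hε0]
        ring
    _ ≤ A * (ε ^ γ * ℓ (1 / ε)) * ρ ^ (-(δ + γ)) := by
        gcongr ?_ * ?_
        exact Real.rpow_le_rpow_of_nonpos hρ hρε (by linarith)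

-- For `ρ ≥ ε` the decay bound and Potter's bound apply; for `ρ ≤ ε` the constant bound `K` wins.
lemma exists_min_le_mul_rescaled (hslow : SlowlyVaryingAtTop ℓ) (hmeas : Measurable ℓ)
    (hbdd : BddAwayOnCompacts ℓ) (hδ : 0 < δ) (hδγ : 0 ≤ δ + γ) (K C : ℝ) :
    ∃ B, 0 ≤ B ∧ ∀ ε ∈ Ioc (0 : ℝ) 1, ∀ ρ ∈ Ioc (0 : ℝ) 1,
      min K (C * (ℓ (ρ / ε) * (ρ / ε) ^ (-γ))) ≤ B * (ε ^ γ * ℓ (1 / ε)) * ρ ^ (-(δ + γ)) := by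
  obtain ⟨A, hA, hpotter⟩ := hslow.potter_bound hmeas hbdd hδ one_pos
  have hℓ1 : 0 < ℓ 1 := hbdd.pos one_pos
  refine ⟨max (|K| / ℓ 1) |C| * A, by positivity, fun ε ⟨hε, hε1⟩ ρ ⟨hρ, hρ1⟩ => ?_⟩
  have hℓε : 0 < ℓ (1 / ε) := hbdd.pos (by positivity)
  have hℓρ : 0 < ℓ (ρ / ε) := hbdd.pos (by positivity)
  rw [mul_assoc (max _ _), mul_assoc (max _ _)]
  rcases le_total ρ ε with hρε | hερ
  · calc min K (C * (ℓ (ρ / ε) * (ρ / ε) ^ (-γ))) ≤ K := min_le_left _ _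
      _ ≤ |K| / ℓ 1 * ℓ 1 := by rw [div_mul_cancel₀ _ hℓ1.ne']; exact le_abs_self K
      _ ≤ max (|K| / ℓ 1) |C| * (A * (ε ^ γ * ℓ (1 / ε)) * ρ ^ (-(δ + γ))) := by
          gcongr
          · exact le_max_left _ _
          · exact apply_one_le_of_potter hpotter hA.le hδγ hρ hρε hε1 hℓε.le
  · calc min K (C * (ℓ (ρ / ε) * (ρ / ε) ^ (-γ)))
        ≤ C * (ℓ (ρ / ε) * (ρ / ε) ^ (-γ)) := min_le_right _ _
      _ ≤ max (|K| / ℓ 1) |C| * (A * (ε ^ γ * ℓ (1 / ε)) * ρ ^ (-(δ + γ))) :=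
          mul_le_mul ((le_abs_self C).trans (le_max_right _ _))
            (mul_rpow_neg_le_of_potter hpotter hε hερ hρ1) (by positivity) (by positivity)

lemma abs_integral_mul_le_of_bounded {Ω : Type*} [MeasurableSpace Ω] {P : Measure Ω}
    [IsFiniteMeasure P] {f g : Ω → ℝ} {K : ℝ} (hf : ∀ ω, |f ω| ≤ K) (hg : ∀ ω, |g ω| ≤ K) :
    |∫ ω, f ω * g ω ∂P| ≤ K * K * P.real univ := by
  rw [← Real.norm_eq_abs]
  refine norm_integral_le_of_norm_le_const (μ := P) (.of_forall fun ω => ?_)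
  rw [norm_mul]
  exact mul_le_mul (hf ω) (hg ω) (norm_nonneg _) ((abs_nonneg _).trans (hf ω))

theorem exists_abs_covariance_rescaled_le {Ω : Type*} [MeasurableSpace Ω] {P : Measure Ω}
    [IsFiniteMeasure P] (hslow : SlowlyVaryingAtTop ℓ) (hmeas : Measurable ℓ)
    (hbdd : BddAwayOnCompacts ℓ) (hδ : 0 < δ) (hδγ : 0 ≤ δ + γ) {q : ℝ × Ω → ℝ} {K C : ℝ}
    (hq : ∀ x, |q x| ≤ K)
    (hcov : ∀ s t, s ≠ t → |∫ ω, q (s, ω) * q (t, ω) ∂P| ≤ C * ℓ |t - s| * |t - s| ^ (-γ)) :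
    ∃ B, 0 ≤ B ∧ ∀ ε ∈ Ioc (0 : ℝ) 1, ∀ y z, y ≠ z → |y - z| ≤ 1 →
      |∫ ω, q (y / ε, ω) * q (z / ε, ω) ∂P| ≤
        B * (ε ^ γ * ℓ (1 / ε)) * |y - z| ^ (-(δ + γ)) := by
  obtain ⟨B, hB, hmin⟩ :=
    exists_min_le_mul_rescaled (γ := γ) hslow hmeas hbdd hδ hδγ (K * K * P.real univ) C
  refine ⟨B, hB, fun ε hε y z hyz hyz1 => ?_⟩
  refine le_trans (le_min ?_ ?_) (hmin ε hε |y - z| ⟨abs_pos.2 (sub_ne_zero.2 hyz), hyz1⟩)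
  · exact abs_integral_mul_le_of_bounded (fun ω => hq _) fun ω => hq _
  · have hdist : |z / ε - y / ε| = |y - z| / ε := by
      rw [← sub_div, abs_div, abs_of_pos hε.1, abs_sub_comm]
    rw [← mul_assoc, ← hdist]
    exact hcov _ _ fun h => hyz ((div_left_inj' hε.1.ne').1 h)

end Rescaling

section Corrector

/-- The normalisation `𝔛(ε) = ε ^ (1 - H) L(1/ε) ^ m` of the corrector. -/
def correctorScale (H : ℝ) (m : ℕ) (L : ℝ → ℝ) (ε : ℝ) : ℝ :=
  ε ^ (1 - H) * L (1 / ε) ^ m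

lemma correctorScale_sq (H : ℝ) (m : ℕ) (L : ℝ → ℝ) {ε : ℝ} (hε : 0 ≤ ε) :
    correctorScale H m L ε ^ 2 = ε ^ (2 * (1 - H)) * L (1 / ε) ^ (2 * m) := by
  rw [correctorScale, mul_pow, ← pow_mul, mul_comm m, ← Real.rpow_mul_natCast hε,
    mul_comm (1 - H), Nat.cast_ofNat]

/-- The integral `∫₀¹ (F₁ 1_{[0,x]} + x F₂) w` defining the corrector before normalisation, for a
deterministic path `w` standing for a realisation of `y ↦ q (y / ε)`. -/
def correctorIntegral (F₁ F₂ w : ℝ → ℝ) (x : ℝ) : ℝ :=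
  ∫ y in (0 : ℝ)..1, (F₁ y * (Icc 0 x).indicator (fun _ => (1 : ℝ)) y + x * F₂ y) * w y

variable {F₁ F₂ w : ℝ → ℝ} {u v x : ℝ}

lemma correctorIntegral_eq
    (h₁ : IntervalIntegrable (fun y => F₁ y * w y) volume 0 1)
    (h₂ : IntervalIntegrable (fun y => F₂ y * w y) volume 0 1) (hx : x ∈ Icc (0 : ℝ) 1) :
    correctorIntegral F₁ F₂ w x = (∫ y in 0..x, F₁ y * w y) + x * ∫ y in 0..1, F₂ y * w y := by
  have hsplit (y : ℝ) : (F₁ y * (Icc 0 x).indicator (fun _ => (1 : ℝ)) y + x * F₂ y) * w y =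
      (Icc 0 x).indicator (fun y => F₁ y * w y) y + x * (F₂ y * w y) := by
    by_cases hy : y ∈ Icc 0 x
    · simp only [indicator_of_mem hy]; ring
    · simp only [indicator_of_notMem hy]; ring
  have hrestrict : ∫ y in 0..1, (Icc 0 x).indicator (fun y => F₁ y * w y) y =
      ∫ y in 0..x, F₁ y * w y := by
    rw [intervalIntegral.integral_of_le zero_le_one, intervalIntegral.integral_of_le hx.1,
      ← integral_Icc_eq_integral_Ioc, ← integral_Icc_eq_integral_Ioc,
      setIntegral_indicator measurableSet_Icc,
      inter_eq_right.2 (Icc_subset_Icc_right hx.2)]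
  have hindicator : IntervalIntegrable ((Icc 0 x).indicator fun y => F₁ y * w y) volume 0 1 := by
    rw [intervalIntegrable_iff] at h₁ ⊢
    exact h₁.indicator measurableSet_Icc
  simp only [correctorIntegral, hsplit]
  rw [intervalIntegral.integral_add hindicator (h₂.const_mul x),
    intervalIntegral.integral_const_mul, hrestrict]

lemma correctorIntegral_sub
    (h₁ : IntervalIntegrable (fun y => F₁ y * w y) volume 0 1)
    (h₂ : IntervalIntegrable (fun y => F₂ y * w y) volume 0 1)
    (hu : u ∈ Icc (0 : ℝ) 1) (hv : v ∈ Icc (0 : ℝ) 1) :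
    correctorIntegral F₁ F₂ w v - correctorIntegral F₁ F₂ w u =
      (∫ y in u..v, F₁ y * w y) + (v - u) * ∫ y in 0..1, F₂ y * w y := by
  have hsub (c : ℝ) (hc : c ∈ Icc (0 : ℝ) 1) :
      IntervalIntegrable (fun y => F₁ y * w y) volume 0 c :=
    h₁.mono_set (uIcc_subset_uIcc_left (by rwa [uIcc_of_le zero_le_one]))
  rw [correctorIntegral_eq h₁ h₂ hu, correctorIntegral_eq h₁ h₂ hv,
    ← intervalIntegral.integral_interval_sub_left (hsub v hv) (hsub u hu)]
  ring

lemma intervalIntegrable_mul_of_bounded {f : ℝ → ℝ} {a b M K : ℝ} (hab : a ≤ b)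
    (hf : Measurable f) (hw : Measurable w) (hfM : ∀ y ∈ Icc a b, |f y| ≤ M)
    (hwK : ∀ y, |w y| ≤ K) : IntervalIntegrable (fun y => f y * w y) volume a b := by
  rw [intervalIntegrable_iff_integrableOn_Icc_of_le hab]
  refine Measure.integrableOn_of_bounded (M := M * K) (by simp) (by fun_prop)
    (ae_restrict_of_forall_mem measurableSet_Icc fun y hy => ?_)
  rw [norm_mul]
  exact mul_le_mul (hfM y hy) (hwK y) (norm_nonneg _) ((abs_nonneg _).trans (hfM y hy))

variable {Ω : Type*} [MeasurableSpace Ω] {P : Measure Ω} [IsFiniteMeasure P]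
  {p : ℝ × Ω → ℝ} {K K₁ K₂ D r : ℝ}

lemma integral_sq_weighted_intervalIntegral_le {f : ℝ → ℝ} {a b M : ℝ} (hr : -1 < r)
    (hab : a ≤ b) (hp : Measurable p) (hpK : ∀ x, |p x| ≤ K) (hf : Measurable f)
    (hfM : ∀ y ∈ Icc a b, |f y| ≤ M) (hD : 0 ≤ D)
    (hcov : ∀ y ∈ Icc a b, ∀ z ∈ Icc a b, y ≠ z →
      |∫ ω, p (y, ω) * p (z, ω) ∂P| ≤ D * |y - z| ^ r) :
    Integrable (fun ω => (∫ y in a..b, f y * p (y, ω)) ^ 2) P ∧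
    ∫ ω, (∫ y in a..b, f y * p (y, ω)) ^ 2 ∂P ≤
      M ^ 2 * D * (2 / (r + 1)) * (b - a) ^ (r + 2) := by
  have hM : 0 ≤ M := (abs_nonneg _).trans (hfM a (left_mem_Icc.2 hab))
  have hG : Measurable fun x : ℝ × Ω => f x.1 * p x := by fun_prop
  have hbound (y : ℝ) (hy : y ∈ Ioc a b) (ω : Ω) : |f y * p (y, ω)| ≤ M * K := by
    rw [abs_mul]
    exact mul_le_mul (hfM y (Ioc_subset_Icc_self hy)) (hpK _) (abs_nonneg _) hM
  refine ⟨integrable_sq_intervalIntegral hab hG hbound,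
    integral_sq_intervalIntegral_le hr hab hG hbound (by positivity) fun y hy z hz hyz => ?_⟩
  have hy' := Ioc_subset_Icc_self hy
  have hz' := Ioc_subset_Icc_self hz
  calc |∫ ω, f y * p (y, ω) * (f z * p (z, ω)) ∂P|
      = |f y| * |f z| * |∫ ω, p (y, ω) * p (z, ω) ∂P| := by
        simp only [mul_mul_mul_comm, integral_const_mul, abs_mul]
    _ ≤ M * M * (D * |y - z| ^ r) := by
        gcongr
        exacts [hfM y hy', hfM z hz', hcov y hy' z hz' hyz]
    _ = M ^ 2 * D * |y - z| ^ r := by ring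

theorem integral_sq_correctorIntegral_sub_le (hr : -1 < r) (hp : Measurable p)
    (hpK : ∀ x, |p x| ≤ K) (hF₁ : Measurable F₁) (hF₂ : Measurable F₂)
    (hK₁ : ∀ y ∈ Icc (0 : ℝ) 1, |F₁ y| ≤ K₁) (hK₂ : ∀ y ∈ Icc (0 : ℝ) 1, |F₂ y| ≤ K₂)
    (hD : 0 ≤ D)
    (hcov : ∀ y ∈ Icc (0 : ℝ) 1, ∀ z ∈ Icc (0 : ℝ) 1, y ≠ z →
      |∫ ω, p (y, ω) * p (z, ω) ∂P| ≤ D * |y - z| ^ r)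
    (hu : 0 ≤ u) (huv : u ≤ v) (hv : v ≤ 1) :
    ∫ ω, (correctorIntegral F₁ F₂ (fun y => p (y, ω)) v -
        correctorIntegral F₁ F₂ (fun y => p (y, ω)) u) ^ 2 ∂P ≤
      4 * D / (r + 1) * (K₁ ^ 2 * (v - u) ^ (r + 2) + K₂ ^ 2 * (v - u) ^ 2) := by
  have hsub : Icc u v ⊆ Icc 0 1 := Icc_subset_Icc hu hv
  obtain ⟨hint₁, hle₁⟩ := integral_sq_weighted_intervalIntegral_le hr huv hp hpK hF₁
    (fun y hy => hK₁ y (hsub hy)) hD fun y hy z hz => hcov y (hsub hy) z (hsub hz)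
  obtain ⟨hint₂, hle₂⟩ :=
    integral_sq_weighted_intervalIntegral_le hr zero_le_one hp hpK hF₂ hK₂ hD hcov
  rw [sub_zero, Real.one_rpow, mul_one] at hle₂
  have hpointwise (ω : Ω) : (correctorIntegral F₁ F₂ (fun y => p (y, ω)) v -
      correctorIntegral F₁ F₂ (fun y => p (y, ω)) u) ^ 2 ≤
      2 * ((∫ y in u..v, F₁ y * p (y, ω)) ^ 2 +
        (v - u) ^ 2 * (∫ y in 0..1, F₂ y * p (y, ω)) ^ 2) := by
    have hw : Measurable fun y => p (y, ω) := by fun_prop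
    rw [correctorIntegral_sub
      (intervalIntegrable_mul_of_bounded zero_le_one hF₁ hw hK₁ fun y => hpK _)
      (intervalIntegrable_mul_of_bounded zero_le_one hF₂ hw hK₂ fun y => hpK _)
      ⟨hu, huv.trans hv⟩ ⟨hu.trans huv, hv⟩, ← mul_pow]
    exact add_sq_le
  calc _ ≤ ∫ ω, 2 * ((∫ y in u..v, F₁ y * p (y, ω)) ^ 2 +
          (v - u) ^ 2 * (∫ y in 0..1, F₂ y * p (y, ω)) ^ 2) ∂P :=
        integral_mono_of_nonneg (.of_forall fun ω => sq_nonneg _)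
          ((hint₁.add (hint₂.const_mul _)).const_mul 2) (.of_forall hpointwise)
    _ = 2 * (∫ ω, (∫ y in u..v, F₁ y * p (y, ω)) ^ 2 ∂P +
          (v - u) ^ 2 * ∫ ω, (∫ y in 0..1, F₂ y * p (y, ω)) ^ 2 ∂P) := by
        rw [integral_const_mul, integral_add hint₁ (hint₂.const_mul _), integral_const_mul]
    _ ≤ 2 * (K₁ ^ 2 * D * (2 / (r + 1)) * (v - u) ^ (r + 2) +
          (v - u) ^ 2 * (K₂ ^ 2 * D * (2 / (r + 1)))) := by gcongr
    _ = 4 * D / (r + 1) * (K₁ ^ 2 * (v - u) ^ (r + 2) + K₂ ^ 2 * (v - u) ^ 2) := by ring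

lemma integral_sq_normalised_correctorIntegral_sub_le {χ B : ℝ} (hr : -1 < r) (hp : Measurable p)
    (hpK : ∀ x, |p x| ≤ K) (hF₁ : Measurable F₁) (hF₂ : Measurable F₂)
    (hK₁ : ∀ y ∈ Icc (0 : ℝ) 1, |F₁ y| ≤ K₁) (hK₂ : ∀ y ∈ Icc (0 : ℝ) 1, |F₂ y| ≤ K₂)
    (hχ : χ ≠ 0) (hB : 0 ≤ B)
    (hcov : ∀ y ∈ Icc (0 : ℝ) 1, ∀ z ∈ Icc (0 : ℝ) 1, y ≠ z →
      |∫ ω, p (y, ω) * p (z, ω) ∂P| ≤ B * χ ^ 2 * |y - z| ^ r)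
    (hu : 0 ≤ u) (huv : u ≤ v) (hv : v ≤ 1) :
    ∫ ω, |1 / χ * correctorIntegral F₁ F₂ (fun y => p (y, ω)) u -
        1 / χ * correctorIntegral F₁ F₂ (fun y => p (y, ω)) v| ^ 2 ∂P ≤
      4 * B / (r + 1) * (K₁ ^ 2 + K₂ ^ 2) * ((v - u) ^ (r + 2) + (v - u) ^ 2) := by
  have hr1 : 0 < r + 1 := by linarith
  have hvu : 0 ≤ v - u := sub_nonneg.2 huv
  have hpow : 0 ≤ (v - u) ^ (r + 2) := Real.rpow_nonneg hvu _
  have hfactor (a b : ℝ) : |1 / χ * a - 1 / χ * b| ^ 2 = (χ ^ 2)⁻¹ * (b - a) ^ 2 := by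
    rw [sq_abs, ← mul_sub, mul_pow, one_div, inv_pow, sub_sq_comm]
  simp only [hfactor, integral_const_mul]
  calc _ ≤ (χ ^ 2)⁻¹ * (4 * (B * χ ^ 2) / (r + 1) *
          (K₁ ^ 2 * (v - u) ^ (r + 2) + K₂ ^ 2 * (v - u) ^ 2)) := by
        gcongr
        exact integral_sq_correctorIntegral_sub_le hr hp hpK hF₁ hF₂ hK₁ hK₂ (by positivity) hcov
          hu huv hv
    _ = 4 * B / (r + 1) * (K₁ ^ 2 * (v - u) ^ (r + 2) + K₂ ^ 2 * (v - u) ^ 2) := by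
        field_simp
    _ ≤ 4 * B / (r + 1) * ((K₁ ^ 2 + K₂ ^ 2) * ((v - u) ^ (r + 2) + (v - u) ^ 2)) := by
        gcongr
        nlinarith [mul_nonneg (sq_nonneg K₁) (sq_nonneg (v - u)), mul_nonneg (sq_nonneg K₂) hpow]
    _ = _ := by ring

end Corrector

/-- Kolmogorov-type moment bound for the rescaled corrector process
`𝒰ᵉ(x) = (1/𝔛(ε)) ∫_0^1 (F₁(y) 1_{[0,x]}(y) + x F₂(y)) q(y/ε) dy`, `𝔛(ε) = ε^{1-H} L(1/ε)^m`:
`E[|𝒰ᵉ(u) - 𝒰ᵉ(v)|²] ≤ C ((v-u)^{2-2mβ-2(1-H)} + (v-u)²)`, uniformly in `ε ∈ (0,ζ)`; since the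
exponent `2 - 2mβ - 2(1-H)` exceeds `1`, this yields Kolmogorov's tightness criterion. -/
theorem corrector_increment_second_moment_bound
    {Ω : Type*} [MeasurableSpace Ω] (P : Measure Ω) [IsProbabilityMeasure P]
    (m : ℕ) (hm : 1 ≤ m) (H : ℝ) (hH : H ∈ Set.Ioo (1 / 2 : ℝ) 1)
    (L : ℝ → ℝ) (hLpos : ∀ x > 0, 0 < L x) (hLmeas : Measurable L)
    (hLslow : SlowlyVaryingAtTop L) (hLbdd : BddAwayOnCompacts L)
    (q : ℝ × Ω → ℝ) (hqmeas : Measurable q) (K : ℝ) (hqbdd : ∀ p, |q p| ≤ K)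
    (C₁ : ℝ)
    (hcov : ∀ s t : ℝ, s ≠ t →
      |∫ ω, q (s, ω) * q (t, ω) ∂P| ≤ C₁ * L |t - s| ^ (2 * m) * |t - s| ^ (-(2 * (1 - H))))
    (F₁ F₂ : ℝ → ℝ) (hF₁meas : Measurable F₁) (hF₂meas : Measurable F₂)
    (K₁ K₂ : ℝ) (hF₁bdd : ∀ y ∈ Set.Icc (0 : ℝ) 1, |F₁ y| ≤ K₁)
    (hF₂bdd : ∀ y ∈ Set.Icc (0 : ℝ) 1, |F₂ y| ≤ K₂)
    (ζ β : ℝ) (hζ : ζ ∈ Set.Ioo (0 : ℝ) 1) (hβ : 0 < β)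
    (hβ' : 2 * m * β + 2 * (1 - H) < 1)
    (U : ℝ → ℝ → Ω → ℝ)
    (hU : ∀ ε x ω, U ε x ω = (1 / (ε ^ (1 - H) * L (1 / ε) ^ m)) *
      ∫ y in (0 : ℝ)..1,
        (F₁ y * Set.indicator (Set.Icc 0 x) (fun _ => (1 : ℝ)) y + x * F₂ y) * q (y / ε, ω)) :
    (1 < 2 - 2 * m * β - 2 * (1 - H)) ∧
    ∃ C : ℝ, ∀ u v : ℝ, 0 ≤ u → u < v → v ≤ 1 → ∀ ε ∈ Set.Ioo (0 : ℝ) ζ,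
      (∫ ω, |U ε u ω - U ε v ω| ^ 2 ∂P) ≤
        C * ((v - u) ^ (2 - 2 * m * β - 2 * (1 - H)) + (v - u) ^ 2) := by
  refine ⟨by linarith, ?_⟩
  obtain ⟨B, hB, hcovB⟩ := exists_abs_covariance_rescaled_le (P := P) (hLslow.pow (2 * m))
    (hLmeas.pow_const _) (hLbdd.pow _) (δ := 2 * m * β) (by positivity)
    (by linarith [hH.2, show 0 < 2 * m * β by positivity]) hqbdd hcov
  refine ⟨4 * B / (-(2 * m * β + 2 * (1 - H)) + 1) * (K₁ ^ 2 + K₂ ^ 2),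
    fun u v hu huv hv ε hε => ?_⟩
  have hχ : 0 < correctorScale H m L ε :=
    mul_pos (Real.rpow_pos_of_pos hε.1 _) (pow_pos (hLpos _ (one_div_pos.2 hε.1)) m)
  have hcovχ (y : ℝ) (hy : y ∈ Icc (0 : ℝ) 1) (z : ℝ) (hz : z ∈ Icc (0 : ℝ) 1) (hyz : y ≠ z) :
      |∫ ω, q (y / ε, ω) * q (z / ε, ω) ∂P| ≤
        B * correctorScale H m L ε ^ 2 * |y - z| ^ (-(2 * m * β + 2 * (1 - H))) := by
    rw [correctorScale_sq H m L hε.1.le]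
    exact hcovB ε ⟨hε.1, (hε.2.trans hζ.2).le⟩ y z hyz
      (abs_le.2 ⟨by linarith [hy.1, hz.2], by linarith [hy.2, hz.1]⟩)
  rw [show 2 - 2 * m * β - 2 * (1 - H) = -(2 * m * β + 2 * (1 - H)) + 2 by ring]
  simp only [hU]
  exact integral_sq_normalised_correctorIntegral_sub_le (p := fun x => q (x.1 / ε, x.2))
    (by linarith) (by fun_prop) (fun x => hqbdd _) hF₁meas hF₂meas hF₁bdd hF₂bdd hχ.ne' hB hcovχ
    hu huv.le hv

end
end
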